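/- Fix p ∈ (0,1). For each n, let d(n) ∈ ℕ and α = α(n) ∈ ℝ^{d(n)} have entries in [0,1] with at least one entry equal to 1. Assume n³·(‖α‖₄/‖α‖₂)⁴ → 0 as n → ∞. Let M(n) be the n×n symmetric random matrix with zero diagonal and i.i.d. standard Gaussian entries above the diagonal, let K_p(M(n)) be the random graph with edge {i,j} present iff M(n)_{ij} ≥ Φ^{−1}(p) (Φ the standard Gaussian CDF, threshold chosen so each edge appears with probability p), and let H_{p,α}(M(n)) be the random graph with edge {i,j} present iff M(n)_{ij} ≥ t_{p,α}/‖α‖₂. Then TV(K_p(M(n)), H_{p,α}(M(n))) → 0. -/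

import Mathlib

open MeasureTheory ProbabilityTheory Real Filter
open scoped Classical ENNReal NNReal

noncomputable section

/-- Euclidean inner product on `Fin d → ℝ`. -/
def dotp {d : ℕ} (x y : Fin d → ℝ) : ℝ := ∑ i, x i * y i

/-- The `q`-norm of a vector `α ∈ ℝ^d`. -/
def nrm {d : ℕ} (q : ℕ) (α : Fin d → ℝ) : ℝ := (∑ i, α i ^ q) ^ ((1 : ℝ) / q)

/-- The centered Gaussian measure `N(0, D_α)` on `ℝ^d`, `D_α = diag α`. -/
def gaussPi (d : ℕ) (α : Fin d → ℝ) : Measure (Fin d → ℝ) :=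
  Measure.pi fun i => gaussianReal 0 (Real.toNNReal (α i))

/-- The law of `n` i.i.d. samples from `N(0, D_α)`. -/
def sampleMeasure (n d : ℕ) (α : Fin d → ℝ) : Measure (Fin n → Fin d → ℝ) :=
  Measure.pi fun _ => gaussPi d α

/-- `t` is the `p`-th upper quantile of `⟨X₁, X₂⟩` for `X₁, X₂` i.i.d. `N(0, D_α)`. -/
def IsThreshold (d : ℕ) (α : Fin d → ℝ) (p t : ℝ) : Prop :=
  ((gaussPi d α).prod (gaussPi d α)) {xy | t ≤ dotp xy.1 xy.2} = ENNReal.ofReal p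

instance (n : ℕ) : MeasurableSpace (SimpleGraph (Fin n)) := ⊤

/-- The anisotropic random geometric graph `G(n, p, α)`, with threshold `t = t_{p,α}`. -/
def geomGraph (n d : ℕ) (α : Fin d → ℝ) (t : ℝ) : Measure (SimpleGraph (Fin n)) :=
  Measure.map (fun X => SimpleGraph.fromRel fun i j => t ≤ dotp (X i) (X j))
    (sampleMeasure n d α)

/-- The Erdős–Rényi random graph `G(n, p)`. -/
def erGraph (n : ℕ) (p : ℝ) : Measure (SimpleGraph (Fin n)) :=
  Measure.map (fun x => SimpleGraph.fromRel fun i j => x s(i, j) ≤ p)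
    (Measure.pi fun _ : Sym2 (Fin n) => volume.restrict (Set.Icc (0 : ℝ) 1))

/-- Total variation distance between two measures. -/
def tvDist {Ω : Type*} [MeasurableSpace Ω] (μ ν : Measure Ω) : ℝ :=
  ⨆ s : {s : Set Ω // MeasurableSet s}, |(μ s.1).toReal - (ν s.1).toReal|

/-- The random graph obtained by thresholding i.i.d. standard Gaussian edge weights
`M(n)_{ij}` at level `thr`: the edge `{i,j}` is present iff `M(n)_{ij} ≥ thr`. -/
def gaussThreshGraph (n : ℕ) (thr : ℝ) : Measure (SimpleGraph (Fin n)) :=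
  Measure.map (fun (x : Sym2 (Fin n) → ℝ) => SimpleGraph.fromRel fun i j => thr ≤ x s(i, j))
    (Measure.pi fun _ : Sym2 (Fin n) => gaussianReal 0 1)


lemma bern_tv {E : Type*} [Fintype E] (p q : ℝ) (hp : p ∈ Set.Ioo (0 : ℝ) 1)
    (A : Finset (E → Bool)) :
    |∑ b ∈ A, (∏ e, (if b e then p else 1 - p)) - ∑ b ∈ A, (∏ e, (if b e then q else 1 - q))|
      ≤ √(exp (Fintype.card E * ((q - p) ^ 2 / (p * (1 - p)))) - 1) := by
  obtain ⟨h0, h1⟩ := hp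
  have h1' : 0 < 1 - p := by linarith
  have key : ∀ f : Bool → ℝ, ∑ b : E → Bool, ∏ e, f (b e) = (f true + f false) ^ Fintype.card E := by
    intro f
    have := Finset.prod_univ_sum (fun _ : E => (Finset.univ : Finset Bool)) (fun _ x => f x)
    simp only [Fintype.piFinset_univ] at this
    rw [← this]; simp
  set w : ℝ → (E → Bool) → ℝ := fun r b => ∏ e, (if b e then r else 1 - r) with hw
  have hsum : ∀ r, ∑ b, w r b = 1 := by
    intro r
    rw [hw]
    have := key (fun x => if x then r else 1 - r)
    simp at this
    simpa using this
  have hpos : ∀ b, 0 < w p b := by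
    intro b
    apply Finset.prod_pos
    intro e _
    split_ifs <;> assumption
  have hchi : ∑ b, (w q b) ^ 2 / w p b = (1 + (q - p) ^ 2 / (p * (1 - p))) ^ Fintype.card E := by
    have := key (fun x => (if x then q else 1 - q) ^ 2 / (if x then p else 1 - p))
    simp only [hw, ← Finset.prod_pow, ← Finset.prod_div_distrib]
    rw [this]
    congr 1
    simp
    field_simp
    ring
  have hdiff : ∑ b, (|w q b - w p b|) ^ 2 / w p b
      = (1 + (q - p) ^ 2 / (p * (1 - p))) ^ Fintype.card E - 1 := by
    have : ∀ b, (|w q b - w p b|) ^ 2 / w p b = (w q b) ^ 2 / w p b - 2 * w q b + w p b := by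
      intro b
      have := (hpos b).ne'
      rw [sq_abs]
      field_simp
      ring
    simp only [this]
    rw [Finset.sum_add_distrib, Finset.sum_sub_distrib, ← Finset.mul_sum, hsum, hsum, hchi]
    ring
  have hcs := Finset.sq_sum_div_le_sum_sq_div Finset.univ (fun b => |w q b - w p b|)
    (fun b _ => hpos b)
  rw [hsum, hdiff, div_one] at hcs
  have hexp : (1 + (q - p) ^ 2 / (p * (1 - p))) ^ Fintype.card E
      ≤ exp (Fintype.card E * ((q - p) ^ 2 / (p * (1 - p)))) := by
    rw [exp_nat_mul]
    apply pow_le_pow_left₀ (by positivity)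
    linarith [add_one_le_exp ((q - p) ^ 2 / (p * (1 - p)))]
  rw [← Finset.sum_sub_distrib]
  apply Real.le_sqrt_of_sq_le
  refine le_trans ?_ (hcs.trans (by linarith))
  apply pow_le_pow_left₀ (abs_nonneg _)
  calc _ ≤ ∑ b ∈ A, |w p b - w q b| := Finset.abs_sum_le_sum_abs _ _
    _ = ∑ b ∈ A, |w q b - w p b| := by simp only [abs_sub_comm]
    _ ≤ _ := Finset.sum_le_univ_sum_of_nonneg (fun _ => abs_nonneg _)

lemma graph_real (n : ℕ) (thr : ℝ) (A : Set (SimpleGraph (Fin n))) :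
    (gaussThreshGraph n thr A).toReal =
      ∑ b ∈ (Finset.univ.filter fun b : Sym2 (Fin n) → Bool =>
        SimpleGraph.fromRel (fun i j => b s(i, j) = true) ∈ A),
        ∏ e, (if b e then (gaussianReal 0 1).real (Set.Ici thr)
          else 1 - (gaussianReal 0 1).real (Set.Ici thr)) := by
  set γ := gaussianReal 0 1 with hγ
  have hms : Measurable (fun y : ℝ => decide (thr ≤ y)) := by
    apply measurable_to_bool
    have : (fun y => decide (thr ≤ y)) ⁻¹' {true} = (Set.Ici thr) := by ext; simp
    rw [this]; exact measurableSet_Ici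
  have hm : Measurable (fun (x : Sym2 (Fin n) → ℝ) (e : Sym2 (Fin n)) => decide (thr ≤ x e)) := by
    apply measurable_pi_lambda
    intro e
    exact hms.comp (measurable_pi_apply e)
  have hG : (fun (x : Sym2 (Fin n) → ℝ) => SimpleGraph.fromRel fun i j => thr ≤ x s(i, j))
      = (fun b : Sym2 (Fin n) → Bool => SimpleGraph.fromRel (fun i j => b s(i, j) = true)) ∘
        (fun (x : Sym2 (Fin n) → ℝ) (e : Sym2 (Fin n)) => decide (thr ≤ x e)) := by
    ext x; simp
  have hmb : Measurable (fun b : Sym2 (Fin n) → Bool =>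
      SimpleGraph.fromRel (fun i j => b s(i, j) = true)) := measurable_of_finite _
  rw [gaussThreshGraph, hG, ← Measure.map_map hmb hm,
    Measure.map_apply hmb (by trivial)]
  have hpi := Measure.pi_map_pi (μ := fun _ : Sym2 (Fin n) => γ)
    (f := fun _ y => decide (thr ≤ y)) (fun _ => hms.aemeasurable)
  rw [hpi]
  have hprob : IsProbabilityMeasure (γ.map fun y => decide (thr ≤ y)) :=
    Measure.isProbabilityMeasure_map hms.aemeasurable
  rw [← Measure.real_def, show ((fun b : Sym2 (Fin n) → Bool =>
      SimpleGraph.fromRel (fun i j => b s(i, j) = true)) ⁻¹' A) =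
      ((Finset.univ.filter fun b : Sym2 (Fin n) → Bool =>
        SimpleGraph.fromRel (fun i j => b s(i, j) = true) ∈ A : Finset _) : Set _) by ext; simp,
    ← sum_measureReal_singleton]
  apply Finset.sum_congr rfl
  intro b _
  rw [Measure.real_def, Measure.pi_singleton, ENNReal.toReal_prod]
  apply Finset.prod_congr rfl
  intro e _
  rw [Measure.map_apply hms (by simp)]
  cases b e
  · have : (fun y => decide (thr ≤ y)) ⁻¹' {false} = (Set.Ici thr)ᶜ := by ext; simp
    rw [this, ← Measure.real_def, probReal_compl_eq_one_sub measurableSet_Ici]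
    simp
  · have : (fun y => decide (thr ≤ y)) ⁻¹' {true} = (Set.Ici thr) := by ext; simp
    rw [this, ← Measure.real_def]; simp

lemma tv_bound (n : ℕ) (a b : ℝ)
    (hp : (gaussianReal 0 1).real (Set.Ici a) ∈ Set.Ioo (0 : ℝ) 1) :
    tvDist (gaussThreshGraph n a) (gaussThreshGraph n b) ≤
      √(exp (Fintype.card (Sym2 (Fin n)) * (((gaussianReal 0 1).real (Set.Ici b)
        - (gaussianReal 0 1).real (Set.Ici a)) ^ 2 / ((gaussianReal 0 1).real (Set.Ici a)
          * (1 - (gaussianReal 0 1).real (Set.Ici a))))) - 1) := by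
  apply Real.iSup_le _ (Real.sqrt_nonneg _)
  intro s
  rw [graph_real, graph_real]
  exact bern_tv _ _ hp _

lemma pdf_le (y : ℝ) : gaussianPDFReal 0 1 y ≤ exp (-(y ^ 2) / 2) := by
  rw [gaussianPDFReal_def]
  simp only [NNReal.coe_one, mul_one, sub_zero]
  apply mul_le_of_le_one_left (exp_pos _).le
  apply inv_le_one_of_one_le₀
  rw [Real.one_le_sqrt]
  nlinarith [pi_gt_three]

lemma mul_exp_le (x : ℝ) : |x| * exp (-(x ^ 2) / 2) ≤ 1 := by
  have h := add_one_le_exp (x ^ 2 / 2)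
  have h2 : |x| ≤ exp (x ^ 2 / 2) := by nlinarith [sq_abs x, sq_nonneg (|x| - 1)]
  calc _ ≤ exp (x ^ 2 / 2) * exp (-(x ^ 2) / 2) := by gcongr
    _ = 1 := by rw [← exp_add]; simp; ring

/-- Interval mass bound. -/
lemma gauss_Ico_le (a b m : ℝ) (hab : a ≤ b) (hm : ∀ y ∈ Set.Ico a b, |m| ≤ |y|) :
    |(gaussianReal 0 1).real (Set.Ici a) - (gaussianReal 0 1).real (Set.Ici b)|
      ≤ exp (-(m ^ 2) / 2) * (b - a) := by
  have h1 : (gaussianReal 0 1).real (Set.Ici a) - (gaussianReal 0 1).real (Set.Ici b)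
      = (gaussianReal 0 1).real (Set.Ico a b) := by
    rw [← measureReal_sdiff (Set.Ici_subset_Ici.2 hab) measurableSet_Ici, Set.Ici_sdiff_Ici]
  rw [h1, abs_of_nonneg measureReal_nonneg, Measure.real_def, gaussianReal_apply _ one_ne_zero]
  apply ENNReal.toReal_le_of_le_ofReal (mul_nonneg (exp_pos _).le (by linarith))
  calc _ ≤ ∫⁻ y in Set.Ico a b, ENNReal.ofReal (exp (-(m ^ 2) / 2)) := by
        apply setLIntegral_mono' measurableSet_Ico
        intro y hy
        apply ENNReal.ofReal_le_ofReal
        refine (pdf_le y).trans ?_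
        have := sq_le_sq.2 (hm y hy)
        gcongr
    _ = _ := by
        rw [setLIntegral_const, Real.volume_Ico, ← ENNReal.ofReal_mul (exp_pos _).le]

lemma gauss_near (a b m : ℝ) (hm : ∀ y ∈ Set.uIcc a b, |m| ≤ |y|) :
    |(gaussianReal 0 1).real (Set.Ici a) - (gaussianReal 0 1).real (Set.Ici b)|
      ≤ exp (-(m ^ 2) / 2) * |b - a| := by
  rcases le_total a b with h | h
  · rw [abs_of_nonneg (sub_nonneg.2 h)]
    exact gauss_Ico_le a b m h (fun y hy => hm y (by rw [Set.uIcc_of_le h]; exact ⟨hy.1, hy.2.le⟩))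
  · rw [abs_sub_comm, abs_sub_comm b a, abs_of_nonneg (sub_nonneg.2 h)]
    exact gauss_Ico_le b a m h (fun y hy => hm y (by rw [Set.uIcc_of_ge h]; exact ⟨hy.1, hy.2.le⟩))

lemma gauss_scale (s u : ℝ) (hu : 0 < u) :
    |(gaussianReal 0 1).real (Set.Ici (s / u)) - (gaussianReal 0 1).real (Set.Ici s)|
      ≤ 2 * |u - 1| := by
  have habs : ∀ y ∈ Set.uIcc (s / u) s, min |s| (|s| / u) ≤ |y| := by
    intro y hy
    rcases le_total 0 s with hs | hs
    · have h2 : 0 ≤ s / u := by positivity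
      rw [abs_of_nonneg hs]
      rw [Set.mem_uIcc] at hy
      rcases hy with hy | hy
      · exact (min_le_right _ _).trans (hy.1.trans (le_abs_self y))
      · exact (min_le_left _ _).trans (hy.1.trans (le_abs_self y))
    · have h2 : s / u ≤ 0 := div_nonpos_of_nonpos_of_nonneg hs hu.le
      rw [abs_of_nonpos hs]
      rw [Set.mem_uIcc] at hy
      rcases hy with hy | hy
      · exact (min_le_left _ _).trans ((neg_le_neg hy.2).trans (neg_le_abs y))
      · refine (min_le_right _ _).trans (le_trans ?_ (neg_le_abs y))
        rw [neg_div]; exact neg_le_neg hy.2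
  rcases le_total 1 u with h | h
  · have hle : |s| / u ≤ |s| := div_le_self (abs_nonneg s) h
    rw [min_eq_right hle] at habs
    have := gauss_near (s / u) s (s / u) (fun y hy => by
      rw [abs_div, abs_of_pos hu]; exact habs y hy)
    refine this.trans ?_
    have e : s - s / u = (s / u) * (u - 1) := by field_simp
    rw [e, abs_mul]
    nlinarith [mul_exp_le (s / u), abs_nonneg (u - 1)]
  · by_cases h2 : u < 1 / 2
    · have i1 : (gaussianReal 0 1).real (Set.Ici (s / u)) ≤ 1 := measureReal_le_one
      have i2 : (gaussianReal 0 1).real (Set.Ici s) ≤ 1 := measureReal_le_one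
      have i3 : 0 ≤ (gaussianReal 0 1).real (Set.Ici (s / u)) := measureReal_nonneg
      have i4 : 0 ≤ (gaussianReal 0 1).real (Set.Ici s) := measureReal_nonneg
      rw [abs_of_nonpos (by linarith : u - 1 ≤ 0)]
      rw [abs_le]; constructor <;> linarith
    · push Not at h2
      have hle : |s| ≤ |s| / u := le_div_self (abs_nonneg s) hu h
      rw [min_eq_left hle] at habs
      refine (gauss_near (s / u) s s habs).trans ?_
      have e : s - s / u = s * ((u - 1) * (1 / u)) := by field_simp
      have hu2 : 1 / u ≤ 2 := by rw [div_le_iff₀ hu]; linarith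
      rw [e, abs_mul, abs_mul, abs_of_pos (by positivity : 0 < 1 / u)]
      have := mul_exp_le s
      have i := abs_nonneg (u - 1)
      calc _ = (|s| * exp (-(s ^ 2) / 2)) * (|u - 1| * (1 / u)) := by ring
        _ ≤ 1 * (|u - 1| * 2) := by gcongr
        _ = _ := by ring

/-- Comparison of `N(0,v)` tail at `t` with standard tail at `t/σ`. -/
lemma gauss_var_compare (t σ : ℝ) (hσ : 0 < σ) (v : ℝ≥0) :
    |(gaussianReal 0 v).real (Set.Ici t) - (gaussianReal 0 1).real (Set.Ici (t / σ))|
      ≤ 2 * |(v : ℝ) / σ ^ 2 - 1| := by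
  rcases eq_or_ne v 0 with rfl | hv
  · have i1 : (gaussianReal 0 0).real (Set.Ici t) ≤ 1 := measureReal_le_one
    have i2 : (gaussianReal 0 1).real (Set.Ici (t / σ)) ≤ 1 := measureReal_le_one
    have i3 : 0 ≤ (gaussianReal 0 0).real (Set.Ici t) := measureReal_nonneg
    have i4 : 0 ≤ (gaussianReal 0 1).real (Set.Ici (t / σ)) := measureReal_nonneg
    simp only [NNReal.coe_zero, zero_div, zero_sub, abs_neg, abs_one]
    rw [abs_le]; constructor <;> linarith
  · have hv' : (0 : ℝ) < v := by positivity
    have hr : 0 < √(v : ℝ) := Real.sqrt_pos.2 hv'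
    have hmap := gaussianReal_map_const_mul (μ := 0) (v := 1) (√(v : ℝ))
    have hvar : NNReal.mk ((√(v : ℝ)) ^ 2) (sq_nonneg _) * 1 = v := by
      ext; simp
    rw [hvar, mul_zero] at hmap
    have e : (gaussianReal 0 v).real (Set.Ici t)
        = (gaussianReal 0 1).real (Set.Ici (t / σ / (√(v : ℝ) / σ))) := by
      rw [← hmap, map_measureReal_apply (by fun_prop) measurableSet_Ici]
      congr 1
      ext y
      simp only [Set.mem_preimage, Set.mem_Ici]
      rw [div_div_div_cancel_right₀ hσ.ne', div_le_iff₀' hr]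
    rw [e]
    refine (gauss_scale _ _ (by positivity)).trans ?_
    set u := √(v : ℝ) / σ
    have hu : 0 < u := by positivity
    have e2 : (v : ℝ) / σ ^ 2 - 1 = (u - 1) * (u + 1) := by
      have : (v : ℝ) / σ ^ 2 = u ^ 2 := by rw [div_pow, Real.sq_sqrt hv'.le]
      rw [this]; ring
    rw [e2, abs_mul, abs_of_pos (by linarith : 0 < u + 1)]
    nlinarith [abs_nonneg (u - 1)]

instance gaussPi_prob (d : ℕ) (α : Fin d → ℝ) : IsProbabilityMeasure (gaussPi d α) := by
  unfold gaussPi; infer_instance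

/-- The law of a linear functional under `N(0, D_α)`. -/
lemma map_dotp (d : ℕ) (α : Fin d → ℝ) (hα : ∀ i, 0 ≤ α i) (x : Fin d → ℝ) :
    (gaussPi d α).map (fun y => dotp x y)
      = gaussianReal 0 (Real.toNNReal (∑ i, α i * x i ^ 2)) := by
  have hm : Measurable (fun y : Fin d → ℝ => dotp x y) := by unfold dotp; fun_prop
  have : IsProbabilityMeasure ((gaussPi d α).map (fun y => dotp x y)) :=
    Measure.isProbabilityMeasure_map hm.aemeasurable
  apply Measure.ext_of_charFun
  ext s
  rw [charFun_gaussianReal, charFun_apply_real, integral_map hm.aemeasurable (by fun_prop)]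
  have e : ∀ y : Fin d → ℝ, Complex.exp (s * (dotp x y : ℝ) * Complex.I)
      = ∏ i, Complex.exp (((s * x i : ℝ) : ℂ) * (y i : ℝ) * Complex.I) := by
    intro y
    rw [← Complex.exp_sum]
    congr 1
    simp only [dotp]
    push_cast
    rw [Finset.mul_sum, Finset.sum_mul]
    exact Finset.sum_congr rfl (fun i _ => by ring)
  simp only [e]
  rw [gaussPi, integral_fintype_prod_eq_prod
    (f := fun i (z : ℝ) => Complex.exp (((s * x i : ℝ) : ℂ) * (z : ℝ) * Complex.I))]
  simp only [← charFun_apply_real, charFun_gaussianReal]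
  rw [← Complex.exp_sum]
  congr 1
  have h0 : 0 ≤ ∑ i, α i * x i ^ 2 :=
    Finset.sum_nonneg (fun i _ => mul_nonneg (hα i) (sq_nonneg _))
  simp only [Real.coe_toNNReal _ h0, Real.coe_toNNReal _ (hα _)]
  push_cast
  simp only [mul_zero, zero_mul, zero_sub, Finset.sum_mul, Finset.sum_div, ← Finset.sum_neg_distrib]
  exact Finset.sum_congr rfl (fun i _ => by ring)

lemma gauss_fourth (v : ℝ≥0) :
    ∫ x, x ^ 4 ∂(gaussianReal 0 v) = (v : ℝ) ^ 2 * ∫ x, x ^ 4 ∂(gaussianReal 0 1) := by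
  have hmap := gaussianReal_map_const_mul (μ := 0) (v := 1) (√(v : ℝ))
  have hvar : NNReal.mk ((√(v : ℝ)) ^ 2) (sq_nonneg _) * 1 = v := by
    ext; simp
  rw [hvar, mul_zero] at hmap
  rw [← hmap, integral_map (by fun_prop) (by fun_prop), ← integral_const_mul]
  congr 1
  ext x
  rw [mul_pow, show √(v : ℝ) ^ 4 = (√(v : ℝ) ^ 2) ^ 2 by ring, Real.sq_sqrt v.coe_nonneg]

lemma gauss_sq_memLp (v : ℝ≥0) : MemLp (fun x : ℝ => x ^ 2) 2 (gaussianReal 0 v) := by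
  have h := memLp_id_gaussianReal' (μ := 0) (v := v) 4 (by norm_num)
  rw [memLp_two_iff_integrable_sq (by fun_prop)]
  have := h.integrable_norm_pow (p := 4) (by norm_num)
  refine this.congr (ae_of_all _ fun x => ?_)
  simp only [id, Real.norm_eq_abs]
  rw [Even.pow_abs (by decide)]; ring

lemma gauss_second (v : ℝ≥0) : ∫ x, x ^ 2 ∂(gaussianReal 0 v) = v := by
  have h := variance_fun_id_gaussianReal (μ := 0) (v := v)
  rw [variance_eq_integral (by fun_prop), integral_id_gaussianReal] at h
  simpa using h

lemma gauss_sq_var (v : ℝ≥0) : Var[fun x : ℝ => x ^ 2; gaussianReal 0 v]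
    ≤ (v : ℝ) ^ 2 * ∫ x, x ^ 4 ∂(gaussianReal 0 1) := by
  rw [← gauss_fourth]
  refine (variance_le_expectation_sq (by fun_prop)).trans (le_of_eq ?_)
  congr 1
  ext x
  simp; ring

/-- `L¹` concentration of the conditional variance. -/
lemma conc (d : ℕ) (α : Fin d → ℝ) (hα : ∀ i, 0 ≤ α i) (hs : 0 < ∑ i, α i ^ 2) :
    Integrable (fun x => |(∑ i, α i * x i ^ 2) / (∑ i, α i ^ 2) - 1|) (gaussPi d α) ∧
    ∫ x, |(∑ i, α i * x i ^ 2) / (∑ i, α i ^ 2) - 1| ∂(gaussPi d α)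
      ≤ √((∫ x, x ^ 4 ∂(gaussianReal 0 1)) * ((∑ i, α i ^ 4) / (∑ i, α i ^ 2) ^ 2)) := by
  set σ2 := ∑ i, α i ^ 2 with hσ2
  set C := ∫ x, x ^ 4 ∂(gaussianReal 0 1) with hC
  have hL : ∀ i, MemLp (fun z : ℝ => α i / σ2 * z ^ 2) 2 (gaussianReal 0 (Real.toNNReal (α i))) :=
    fun i => (gauss_sq_memLp _).const_mul _
  have hLi : ∀ i, MemLp (fun x : Fin d → ℝ => α i / σ2 * x i ^ 2) 2 (gaussPi d α) := by
    intro i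
    exact (hL i).comp_measurePreserving
      (measurePreserving_eval (fun i => gaussianReal 0 (Real.toNNReal (α i))) i)
  set S : (Fin d → ℝ) → ℝ := fun x => ∑ i, α i / σ2 * x i ^ 2 with hS
  have hSL : MemLp S 2 (gaussPi d α) := memLp_finsetSum _ (fun i _ => hLi i)
  have hSe : ∀ x : Fin d → ℝ, (∑ i, α i * x i ^ 2) / σ2 = S x := by
    intro x
    rw [Finset.sum_div]
    exact Finset.sum_congr rfl (fun i _ => by ring)
  have hmean : ∫ x, S x ∂(gaussPi d α) = 1 := by
    rw [integral_finsetSum _ (fun i _ => (hLi i).integrable (by norm_num))]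
    have : ∀ i, ∫ x : Fin d → ℝ, α i / σ2 * x i ^ 2 ∂(gaussPi d α) = α i ^ 2 / σ2 := by
      intro i
      have hp := (measurePreserving_eval (fun i => gaussianReal 0 (Real.toNNReal (α i))) i)
      have := integral_map (μ := gaussPi d α) (φ := fun x : Fin d → ℝ => x i)
        (f := fun z : ℝ => α i / σ2 * z ^ 2) (measurable_pi_apply i).aemeasurable (by fun_prop)
      rw [← this]
      have hp2 : (gaussPi d α).map (fun x : Fin d → ℝ => x i)
          = gaussianReal 0 (Real.toNNReal (α i)) := hp.map_eq
      rw [hp2, integral_const_mul, gauss_second, Real.coe_toNNReal _ (hα i)]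
      ring
    simp only [this]
    rw [← Finset.sum_div, div_self hs.ne']
  have hvar : Var[S; gaussPi d α] ≤ C * ((∑ i, α i ^ 4) / σ2 ^ 2) := by
    have h := variance_sum_pi (μ := fun i => gaussianReal 0 (Real.toNNReal (α i)))
      (X := fun i z => α i / σ2 * z ^ 2) hL
    have h' : Var[S; gaussPi d α] = ∑ i, Var[fun z : ℝ => α i / σ2 * z ^ 2; gaussianReal 0 (Real.toNNReal (α i))] := by
      rw [← h]; congr 1; ext x; simp [hS]
    rw [h', Finset.sum_div, Finset.mul_sum]
    apply Finset.sum_le_sum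
    intro i _
    rw [variance_const_mul]
    have := gauss_sq_var (Real.toNNReal (α i))
    rw [Real.coe_toNNReal _ (hα i)] at this
    calc _ ≤ (α i / σ2) ^ 2 * (α i ^ 2 * C) := by gcongr
      _ = _ := by ring
  have hD : MemLp (fun x => S x - 1) 2 (gaussPi d α) := hSL.sub (memLp_const 1)
  have hDa : MemLp (fun x => |S x - 1|) 2 (gaussPi d α) := hD.norm
  simp only [hSe]
  refine ⟨hDa.integrable (by norm_num), ?_⟩
  apply Real.le_sqrt_of_sq_le
  refine le_trans ?_ hvar
  have h1 := variance_nonneg (fun x => |S x - 1|) (gaussPi d α)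
  rw [variance_eq_sub hDa] at h1
  rw [variance_eq_integral hSL.aestronglyMeasurable.aemeasurable, hmean]
  have : ∫ x, ((fun x => |S x - 1|) ^ 2) x ∂(gaussPi d α) = ∫ x, (S x - 1) ^ 2 ∂(gaussPi d α) := by
    congr 1; ext x; simp
  rw [this] at h1
  linarith

lemma kolm (d : ℕ) (α : Fin d → ℝ) (hα : ∀ i, 0 ≤ α i) (hs : 0 < ∑ i, α i ^ 2) (p t : ℝ)
    (hp : 0 ≤ p) (ht : IsThreshold d α p t) :
    |p - (gaussianReal 0 1).real (Set.Ici (t / √(∑ i, α i ^ 2)))|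
      ≤ 2 * √((∫ x, x ^ 4 ∂(gaussianReal 0 1)) * ((∑ i, α i ^ 4) / (∑ i, α i ^ 2) ^ 2)) := by
  have hms : MeasurableSet {xy : (Fin d → ℝ) × (Fin d → ℝ) | t ≤ dotp xy.1 xy.2} := by
    apply measurableSet_le measurable_const
    unfold dotp; fun_prop
  have hslice : ∀ x, (gaussPi d α) (Prod.mk x ⁻¹' {xy | t ≤ dotp xy.1 xy.2})
      = gaussianReal 0 (Real.toNNReal (∑ i, α i * x i ^ 2)) (Set.Ici t) := by
    intro x
    rw [← map_dotp d α hα x, Measure.map_apply (by unfold dotp; fun_prop) measurableSet_Ici]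
    rfl
  unfold IsThreshold at ht
  have hmeas := measurable_measure_prodMk_left (ν := gaussPi d α) hms
  rw [Measure.prod_apply hms] at ht
  simp only [hslice] at ht hmeas
  set F : (Fin d → ℝ) → ℝ :=
    fun x => (gaussianReal 0 (Real.toNNReal (∑ i, α i * x i ^ 2))).real (Set.Ici t) with hF
  have hFm : Measurable F := hmeas.ennreal_toReal
  have hFi : Integrable F (gaussPi d α) := by
    apply Integrable.of_bound hFm.aestronglyMeasurable 1
    refine ae_of_all _ fun x => ?_
    rw [Real.norm_eq_abs, abs_of_nonneg measureReal_nonneg]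
    exact measureReal_le_one
  have hpF : p = ∫ x, F x ∂(gaussPi d α) := by
    simp only [hF, Measure.real_def]
    rw [integral_toReal hmeas.aemeasurable (ae_of_all _ fun x => measure_lt_top _ _), ht,
      ENNReal.toReal_ofReal hp]
  obtain ⟨hci, hc⟩ := conc d α hα hs
  set q := (gaussianReal 0 1).real (Set.Ici (t / √(∑ i, α i ^ 2)))
  have e : p - q = ∫ x, (F x - q) ∂(gaussPi d α) := by
    rw [integral_sub hFi (integrable_const _), ← hpF]; simp
  rw [e]
  refine (abs_integral_le_integral_abs).trans ?_
  calc _ ≤ ∫ x, 2 * |(∑ i, α i * x i ^ 2) / (∑ i, α i ^ 2) - 1| ∂(gaussPi d α) := by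
        apply integral_mono (hFi.sub (integrable_const _)).abs (hci.const_mul 2)
        intro x
        have := gauss_var_compare t (√(∑ i, α i ^ 2)) (Real.sqrt_pos.2 hs)
          (Real.toNNReal (∑ i, α i * x i ^ 2))
        rw [Real.sq_sqrt hs.le, Real.coe_toNNReal _
          (Finset.sum_nonneg fun i _ => mul_nonneg (hα i) (sq_nonneg _))] at this
        exact this
    _ ≤ _ := by
        rw [integral_const_mul]
        gcongr

/-- Lemma 10. If `n³(‖α‖₄/‖α‖₂)⁴ → 0`, then
`TV(K_p(M(n)), H_{p,α}(M(n))) → 0`, where `K_p` thresholds the Gaussian entries at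
`Φ⁻¹(p)` (so each edge appears with probability `p`) and `H_{p,α}` thresholds them at
`t_{p,α}/‖α‖₂`. -/
theorem tv_threshold_graphs_tendsto_zero (p : ℝ) (hp : p ∈ Set.Ioo (0 : ℝ) 1)
    (tp : ℝ) (htp : (gaussianReal 0 1) (Set.Ici tp) = ENNReal.ofReal p)
    (d : ℕ → ℕ) (α : (n : ℕ) → Fin (d n) → ℝ)
    (hα : ∀ n i, α n i ∈ Set.Icc (0 : ℝ) 1)
    (hmax : ∀ n, ∃ i, α n i = 1)
    (t : ℕ → ℝ) (ht : ∀ n, IsThreshold (d n) (α n) p (t n))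
    (hlim : Tendsto (fun (n : ℕ) => (n : ℝ) ^ 3 * (nrm 4 (α n) / nrm 2 (α n)) ^ 4)
      atTop (nhds 0)) :
    Tendsto (fun n => tvDist (gaussThreshGraph n tp)
        (gaussThreshGraph n (t n / nrm 2 (α n))))
      atTop (nhds 0) := by
  have hα0 : ∀ n i, 0 ≤ α n i := fun n i => (hα n i).1
  have hs : ∀ n, 0 < ∑ i, α n i ^ 2 := by
    intro n
    obtain ⟨i, hi⟩ := hmax n
    exact Finset.sum_pos' (fun i _ => sq_nonneg _) ⟨i, Finset.mem_univ _, by rw [hi]; norm_num⟩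
  have h2 : ∀ n, nrm 2 (α n) = √(∑ i, α n i ^ 2) := by
    intro n
    rw [nrm, Real.sqrt_eq_rpow]; norm_num
  have hε : ∀ n, (nrm 4 (α n) / nrm 2 (α n)) ^ 4 = (∑ i, α n i ^ 4) / (∑ i, α n i ^ 2) ^ 2 := by
    intro n
    have h4 : (nrm 4 (α n)) ^ 4 = ∑ i, α n i ^ 4 := by
      have h0 : 0 ≤ ∑ i, α n i ^ 4 := Finset.sum_nonneg fun i _ => pow_nonneg (hα0 n i) 4
      rw [nrm, ← Real.rpow_natCast, ← Real.rpow_mul h0]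
      norm_num
    rw [div_pow, h4, h2, show √(∑ i, α n i ^ 2) ^ 4 = (√(∑ i, α n i ^ 2) ^ 2) ^ 2 by ring,
      Real.sq_sqrt (hs n).le]
  simp only [hε] at hlim
  have htp' : (gaussianReal 0 1).real (Set.Ici tp) = p := by
    rw [Measure.real_def, htp, ENNReal.toReal_ofReal hp.1.le]
  set q : ℕ → ℝ := fun n => (gaussianReal 0 1).real (Set.Ici (t n / nrm 2 (α n))) with hq
  set C := ∫ x, x ^ 4 ∂(gaussianReal 0 1) with hC
  have hC0 : 0 ≤ C := integral_nonneg fun x => by positivity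
  set ε : ℕ → ℝ := fun n => (∑ i, α n i ^ 4) / (∑ i, α n i ^ 2) ^ 2 with hεd
  have hε0 : ∀ n, 0 ≤ ε n := fun n =>
    div_nonneg (Finset.sum_nonneg fun i _ => pow_nonneg (hα0 n i) 4) (sq_nonneg _)
  have hpp : 0 < p * (1 - p) := mul_pos hp.1 (by linarith [hp.2])
  have hqb : ∀ n, (q n - p) ^ 2 ≤ 4 * (C * ε n) := by
    intro n
    have := kolm (d n) (α n) (hα0 n) (hs n) p (t n) hp.1.le (ht n)
    rw [← h2] at this
    have h3 := pow_le_pow_left₀ (abs_nonneg _) this 2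
    rw [sq_abs, mul_pow, Real.sq_sqrt (mul_nonneg hC0 (hε0 n))] at h3
    calc (q n - p) ^ 2 = (p - q n) ^ 2 := by ring
      _ ≤ _ := h3
      _ = _ := by norm_num [hεd]
  have hcard : ∀ n : ℕ, (Fintype.card (Sym2 (Fin n)) : ℝ) ≤ (n : ℝ) ^ 3 + (n : ℝ) ^ 3 := by
    intro n
    have h1 : Fintype.card (Sym2 (Fin n)) ≤ n * n := by
      have := Fintype.card_le_of_surjective (Quot.mk _ : Fin n × Fin n → Sym2 (Fin n))
        Quot.mk_surjective
      simpa using this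
    have h3 : n * n ≤ n ^ 3 := by
      rcases Nat.eq_zero_or_pos n with rfl | h
      · simp
      · calc n * n = n ^ 2 := by ring
          _ ≤ n ^ 3 := Nat.pow_le_pow_right h (by norm_num)
    have : Fintype.card (Sym2 (Fin n)) ≤ n ^ 3 + n ^ 3 := by omega
    exact_mod_cast this
  set B : ℕ → ℝ := fun n => √(exp (8 * C / (p * (1 - p)) * ((n : ℝ) ^ 3 * ε n)) - 1) with hB
  have hBlim : Tendsto B atTop (nhds 0) := by
    have hc : Continuous fun y : ℝ => √(exp (8 * C / (p * (1 - p)) * y) - 1) := by fun_prop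
    have := (hc.tendsto 0).comp hlim
    simp only [mul_zero, exp_zero, sub_self, Real.sqrt_zero] at this
    exact this
  refine squeeze_zero (fun n => Real.iSup_nonneg fun s => abs_nonneg _) (fun n => ?_) hBlim
  refine (tv_bound n tp _ (by rw [htp']; exact hp)).trans ?_
  rw [htp']
  apply Real.sqrt_le_sqrt
  apply sub_le_sub_right
  apply Real.exp_le_exp.2
  calc _ ≤ ((n : ℝ) ^ 3 + (n : ℝ) ^ 3) * (4 * (C * ε n) / (p * (1 - p))) := by
        gcongr
        · exact hcard n
        · exact hqb n
    _ = _ := by ring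

end
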